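/- For every finite set {B₁, …, B_k} of finite algebras in the language {∧, ∨, ¬, 0, 1} with the property that a quasi-identity is valid in all of B₁, …, B_k if and only if it is admissible in D₄, one has [10] ≤_m [|B₁|, …, |B_k|] in the multiset ordering. In particular, no algebra of fewer than 10 elements suffices to test admissibility of quasi-identities in the variety of De Morgan algebras. -/

import Mathlib

/-!
A quasi-identity is admissible in `D₄` iff it is valid in the free De Morgan algebra `F` on
countably many generators. The proof exhibits a ten-element subalgebra `C` of `F`, namely
`{0} ∪ 2³ ∪ {1}` with a new bottom and a new top added to the cube, such that every non-injective
homomorphism from `C` to `F` identifies two fixed elements `e ≠ p`. If `B₁, …, B_k` have exactly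
the admissible quasi-identities, then:

* the quasi-identity `relC ⇒ e ≈ p` is not admissible, since `C` embeds in `F`; so it fails in
  some `B_i` under an assignment `v`, which amounts to a homomorphism `C → B_i` separating `e`, `p`;
* for distinct elements `c`, `d` of `C`, the quasi-identity `relC, c ≈ d ⇒ e ≈ p` is
  admissible, hence valid in `B_i`; so `v` separates `c` and `d`.

Thus `C` injects into `B_i` and `|B_i| ≥ 10`.

`C` is generated by the atoms `f, p, q` of its cube, subject to `relC`; its ten elements are the
terms `elt`. A homomorphism `C → D₄` is one of five (`relC_cases`). A homomorphism `h : C → F` is a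
family of homomorphisms `C → D₄`, one for each assignment of `D₄` to the generators of `F`. If `h`
separates `e` and `p`, three kinds of these occur in the family: at the constant assignment `1`,
where terms are Boolean (`eval_u`); at the constant assignment `b`, where a term with value `1` is
`1` everywhere (`eval_b`); and at an assignment separating `e` and `p`. Jointly these three are
injective on `C` (`elt_separated`).
-/

/-- Terms in the language {∧, ∨, ¬, 0, 1} over a set `V` of variables. -/
inductive DMTerm (V : Type) : Type
  | var : V → DMTerm V
  | meet : DMTerm V → DMTerm V → DMTerm V
  | join : DMTerm V → DMTerm V → DMTerm V
  | neg : DMTerm V → DMTerm V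
  | zero : DMTerm V
  | one : DMTerm V

/-- An algebra in the language {∧, ∨, ¬, 0, 1}. -/
structure DMAlg where
  carrier : Type
  meet : carrier → carrier → carrier
  join : carrier → carrier → carrier
  neg : carrier → carrier
  zero : carrier
  one : carrier

/-- Evaluation of a term in an algebra under an assignment of the variables. -/
def DMTerm.eval {V : Type} (A : DMAlg) (v : V → A.carrier) : DMTerm V → A.carrier
  | .var x => v x
  | .meet t s => A.meet (t.eval A v) (s.eval A v)
  | .join t s => A.join (t.eval A v) (s.eval A v)
  | .neg t => A.neg (t.eval A v)
  | .zero => A.zero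
  | .one => A.one

/-- Substitution of terms for variables. -/
def DMTerm.subst {V W : Type} (s : V → DMTerm W) : DMTerm V → DMTerm W
  | .var x => s x
  | .meet t u => .meet (t.subst s) (u.subst s)
  | .join t u => .join (t.subst s) (u.subst s)
  | .neg t => .neg (t.subst s)
  | .zero => .zero
  | .one => .one

/-- Validity of the identity `φ ≈ ψ` in the algebra `A`. -/
def DMIdValid {V : Type} (A : DMAlg) (φ ψ : DMTerm V) : Prop :=
  ∀ v : V → A.carrier, φ.eval A v = ψ.eval A v

/-- Validity of the quasi-identity `Γ ⇒ φ ≈ ψ` in the algebra `A`. -/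
def DMQValid (A : DMAlg) (Γ : List (DMTerm ℕ × DMTerm ℕ)) (φ ψ : DMTerm ℕ) : Prop :=
  ∀ v : ℕ → A.carrier,
    (∀ p ∈ Γ, p.1.eval A v = p.2.eval A v) → φ.eval A v = ψ.eval A v

/-- Admissibility of the quasi-identity `Γ ⇒ φ ≈ ψ` in the algebra `M`. -/
def DMAdmissible (M : DMAlg) (Γ : List (DMTerm ℕ × DMTerm ℕ)) (φ ψ : DMTerm ℕ) : Prop :=
  ∀ s : ℕ → DMTerm ℕ,
    (∀ p ∈ Γ, DMIdValid M (p.1.subst s) (p.2.subst s)) →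
    DMIdValid M (φ.subst s) (ψ.subst s)

/-- The four-element De Morgan algebra D₄: 0 < a, b < 1 with a, b incomparable. -/
inductive D4 : Type
  | z  -- 0
  | a
  | b
  | u  -- 1
deriving DecidableEq

def D4.meet : D4 → D4 → D4
  | .z, _ => .z
  | _, .z => .z
  | .u, y => y
  | x, .u => x
  | .a, .a => .a
  | .b, .b => .b
  | .a, .b => .z
  | .b, .a => .z

def D4.join : D4 → D4 → D4
  | .u, _ => .u
  | _, .u => .u
  | .z, y => y
  | x, .z => x
  | .a, .a => .a
  | .b, .b => .b
  | .a, .b => .u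
  | .b, .a => .u

def D4.neg : D4 → D4
  | .z => .u
  | .u => .z
  | .a => .a
  | .b => .b

def D4alg : DMAlg :=
  ⟨D4, D4.meet, D4.join, D4.neg, D4.z, D4.u⟩

/-- The Dershowitz–Manna multiset ordering (induced by the usual order on `ℕ`). -/
def MultisetLE (N N' : Multiset ℕ) : Prop :=
  ∀ x : ℕ, N'.count x < N.count x → ∃ y : ℕ, x < y ∧ N.count y < N'.count y

/-- Substituting and then evaluating is evaluating at the values of the substituted terms. -/
theorem DMTerm.eval_subst {V W : Type} (A : DMAlg) (s : V → DMTerm W) (v : W → A.carrier)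
    (t : DMTerm V) : (t.subst s).eval A v = t.eval A (fun x => (s x).eval A v) := by
  induction t <;> simp_all [DMTerm.subst, DMTerm.eval]

instance : Fintype D4 := ⟨{.z, .a, .b, .u}, by intro x; cases x <;> decide⟩

/-- The elements `0, 1, e, f, p, q, f ∨ p, f ∨ q, p ∨ q, f ∨ p ∨ q` of the ten-element algebra, as
terms in its generators `f = var 0`, `p = var 1`, `q = var 2`, where `e = f ∧ p` is the bottom of
the cube. -/
def elt : Fin 10 → DMTerm ℕ :=
  ![.zero, .one, .meet (.var 0) (.var 1), .var 0, .var 1, .var 2,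
    .join (.var 0) (.var 1), .join (.var 0) (.var 2), .join (.var 1) (.var 2),
    .join (.join (.var 0) (.var 1)) (.var 2)]

/-- Relations presenting the ten-element algebra: `¬f = p ∨ q`, `¬p = f ∨ p`, `¬q = f ∨ q`, and
any two of `f, p, q` have the same meet. -/
def relC : List (DMTerm ℕ × DMTerm ℕ) :=
  [(.neg (.var 0), .join (.var 1) (.var 2)),
   (.neg (.var 1), .join (.var 0) (.var 1)),
   (.neg (.var 2), .join (.var 0) (.var 2)),
   (.meet (.var 0) (.var 1), .meet (.var 0) (.var 2)),
   (.meet (.var 0) (.var 1), .meet (.var 1) (.var 2))]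

/-- The values of the terms `elt` in `D₄` when `f, p, q` take the given values. -/
def eltVal (f p q : D4) : Fin 10 → D4 :=
  ![.z, .u, f.meet p, f, p, q, f.join p, f.join q, p.join q, (f.join p).join q]

theorem elt_eval (w : ℕ → D4) (i : Fin 10) :
    (elt i).eval D4alg w = eltVal (w 0) (w 1) (w 2) i := by
  fin_cases i <;> rfl

theorem elt_subst_eval (s : ℕ → DMTerm ℕ) (v : ℕ → D4) (i : Fin 10) :
    ((elt i).subst s).eval D4alg v =
      eltVal ((s 0).eval D4alg v) ((s 1).eval D4alg v) ((s 2).eval D4alg v) i :=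
  (DMTerm.eval_subst D4alg s v (elt i)).trans (elt_eval (fun x => (s x).eval D4alg v) i)

/-- The five homomorphisms from the ten-element algebra to `D₄`. -/
theorem relC_cases (w : ℕ → D4) (h : ∀ r ∈ relC, r.1.eval D4alg w = r.2.eval D4alg w) :
    (w 0 = .u ∧ w 1 = .z ∧ w 2 = .z) ∨ (w 0 = .a ∧ w 1 = .a ∧ w 2 = .a) ∨
    (w 0 = .b ∧ w 1 = .b ∧ w 2 = .b) ∨ (w 0 = .z ∧ w 1 = .a ∧ w 2 = .b) ∨
    (w 0 = .z ∧ w 1 = .b ∧ w 2 = .a) := by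
  have key : ∀ f p q : D4, f.neg = p.join q → p.neg = f.join p → q.neg = f.join q →
      f.meet p = f.meet q → f.meet p = p.meet q →
      (f = .u ∧ p = .z ∧ q = .z) ∨ (f = .a ∧ p = .a ∧ q = .a) ∨ (f = .b ∧ p = .b ∧ q = .b) ∨
      (f = .z ∧ p = .a ∧ q = .b) ∨ (f = .z ∧ p = .b ∧ q = .a) := by
    decide
  simp only [relC, List.forall_mem_cons] at h
  obtain ⟨h1, h2, h3, h4, h5, -⟩ := h
  exact key _ _ _ h1 h2 h3 h4 h5

/-- The homomorphisms to `D₄` with `(f, p, q) ↦ (1, 0, 0)`, `(b, b, b)`, and `(0, a, b)` or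
`(0, b, a)` are jointly injective on the ten-element algebra. -/
theorem elt_separated (p q : D4) (hpq : (p = .a ∧ q = .b) ∨ (p = .b ∧ q = .a)) (i j : Fin 10)
    (h1 : eltVal .u .z .z i = eltVal .u .z .z j) (h2 : eltVal .b .b .b i = eltVal .b .b .b j)
    (h3 : eltVal .z p q i = eltVal .z p q j) : i = j := by
  rcases hpq with ⟨rfl, rfl⟩ | ⟨rfl, rfl⟩ <;> revert i j <;> decide

/-- `{0, 1}` is a subalgebra of `D₄`. Hence a free De Morgan algebra has no element equal to its own
negation, although `D₄` has two. -/
theorem eval_u (t : DMTerm ℕ) :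
    t.eval D4alg (fun _ => D4.u) = D4.z ∨ t.eval D4alg (fun _ => D4.u) = D4.u := by
  have hmeet : ∀ x y : D4, (x = .z ∨ x = .u) → (y = .z ∨ y = .u) →
      (x.meet y = .z ∨ x.meet y = .u) := by decide
  have hjoin : ∀ x y : D4, (x = .z ∨ x = .u) → (y = .z ∨ y = .u) →
      (x.join y = .z ∨ x.join y = .u) := by decide
  have hneg : ∀ x : D4, (x = .z ∨ x = .u) → (x.neg = .z ∨ x.neg = .u) := by decide
  induction t with
  | var x => exact Or.inr rfl
  | meet t s ht hs => exact hmeet _ _ ht hs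
  | join t s ht hs => exact hjoin _ _ ht hs
  | neg t ht => exact hneg _ ht
  | zero => exact Or.inl rfl
  | one => exact Or.inr rfl

/-- The subalgebra `{0, b, 1}` of `D₄` is a chain, and at the constant assignment `b` its middle
element acts as an undetermined truth value: a term with value `0` or `1` there
has that value at every `v`. -/
theorem eval_b (v : ℕ → D4) (t : DMTerm ℕ) :
    t.eval D4alg (fun _ => D4.b) = D4.b ∨
    (t.eval D4alg (fun _ => D4.b) = D4.z ∧ t.eval D4alg v = D4.z) ∨
    (t.eval D4alg (fun _ => D4.b) = D4.u ∧ t.eval D4alg v = D4.u) := by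
  have hmeet : ∀ x x' y y' : D4, (x = .b ∨ (x = .z ∧ x' = .z) ∨ (x = .u ∧ x' = .u)) →
      (y = .b ∨ (y = .z ∧ y' = .z) ∨ (y = .u ∧ y' = .u)) →
      (x.meet y = .b ∨ (x.meet y = .z ∧ x'.meet y' = .z) ∨
        (x.meet y = .u ∧ x'.meet y' = .u)) := by decide
  have hjoin : ∀ x x' y y' : D4, (x = .b ∨ (x = .z ∧ x' = .z) ∨ (x = .u ∧ x' = .u)) →
      (y = .b ∨ (y = .z ∧ y' = .z) ∨ (y = .u ∧ y' = .u)) →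
      (x.join y = .b ∨ (x.join y = .z ∧ x'.join y' = .z) ∨
        (x.join y = .u ∧ x'.join y' = .u)) := by decide
  have hneg : ∀ x x' : D4, (x = .b ∨ (x = .z ∧ x' = .z) ∨ (x = .u ∧ x' = .u)) →
      (x.neg = .b ∨ (x.neg = .z ∧ x'.neg = .z) ∨ (x.neg = .u ∧ x'.neg = .u)) := by decide
  induction t with
  | var x => exact Or.inl rfl
  | meet t s ht hs => exact hmeet _ _ _ _ ht hs
  | join t s ht hs => exact hjoin _ _ _ _ ht hs
  | neg t ht => exact hneg _ _ ht
  | zero => exact Or.inr (Or.inl ⟨rfl, rfl⟩)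
  | one => exact Or.inr (Or.inr ⟨rfl, rfl⟩)

/-- Every homomorphism from the ten-element algebra to the free algebra that identifies two
distinct elements also identifies `e` and `p`. -/
theorem admissible_of_ne {i j : Fin 10} (hij : i ≠ j) :
    DMAdmissible D4alg ((elt i, elt j) :: relC) (elt 2) (elt 4) := by
  intro s hs
  rw [List.forall_mem_cons] at hs
  obtain ⟨hsij, hrel⟩ := hs
  have hcases (v : ℕ → D4) := relC_cases (fun n => (s n).eval D4alg v) fun r hr =>
    (DMTerm.eval_subst D4alg s v r.1).symm.trans
      ((hrel r hr v).trans (DMTerm.eval_subst D4alg s v r.2))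
  have heq (v : ℕ → D4) :
      eltVal ((s 0).eval D4alg v) ((s 1).eval D4alg v) ((s 2).eval D4alg v) i =
        eltVal ((s 0).eval D4alg v) ((s 1).eval D4alg v) ((s 2).eval D4alg v) j :=
    (elt_subst_eval s v i).symm.trans ((hsij v).trans (elt_subst_eval s v j))
  by_contra hcon
  obtain ⟨v, hv'⟩ := not_forall.mp hcon
  change ℕ → D4 at v
  have hv : ¬ eltVal ((s 0).eval D4alg v) ((s 1).eval D4alg v) ((s 2).eval D4alg v) 2 =
      eltVal ((s 0).eval D4alg v) ((s 1).eval D4alg v) ((s 2).eval D4alg v) 4 := fun h =>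
    hv' ((elt_subst_eval s v 2).trans (h.trans (elt_subst_eval s v 4).symm))
  -- only the two homomorphisms with `f ↦ 0` separate `e` and `p`
  have hpq : (s 0).eval D4alg v = D4.z ∧
      (((s 1).eval D4alg v = D4.a ∧ (s 2).eval D4alg v = D4.b) ∨
       ((s 1).eval D4alg v = D4.b ∧ (s 2).eval D4alg v = D4.a)) := by
    rcases hcases v with ⟨h0, h1, h2⟩ | ⟨h0, h1, h2⟩ | ⟨h0, h1, h2⟩ | ⟨h0, h1, h2⟩ | ⟨h0, h1, h2⟩
    · rw [h0, h1, h2] at hv; exact absurd rfl hv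
    · rw [h0, h1, h2] at hv; exact absurd rfl hv
    · rw [h0, h1, h2] at hv; exact absurd rfl hv
    · exact ⟨h0, Or.inl ⟨h1, h2⟩⟩
    · exact ⟨h0, Or.inr ⟨h1, h2⟩⟩
  -- `(1, 0, 0)` is the only one of the five homomorphisms with Boolean values
  have hu : (s 0).eval D4alg (fun _ => D4.u) = D4.u ∧ (s 1).eval D4alg (fun _ => D4.u) = D4.z ∧
      (s 2).eval D4alg (fun _ => D4.u) = D4.z := by
    have b1 := eval_u (s 1)
    have := hcases (fun _ => D4.u)
    grind
  -- `f` is not `1` at `v`, so it is not `1` at the constant assignment `b` either;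
  -- there the values lie in `{0, b, 1}`, which leaves only `(b, b, b)`
  have hb : (s 0).eval D4alg (fun _ => D4.b) = D4.b ∧ (s 1).eval D4alg (fun _ => D4.b) = D4.b ∧
      (s 2).eval D4alg (fun _ => D4.b) = D4.b := by
    have b0 := eval_b v (s 0)
    have b1 := eval_b v (s 1)
    have b2 := eval_b v (s 2)
    have := hcases (fun _ => D4.b)
    grind
  refine hij (elt_separated _ _ hpq.2 i j ?_ ?_ ?_)
  · simpa only [hu.1, hu.2.1, hu.2.2] using heq (fun _ => D4.u)
  · simpa only [hb.1, hb.2.1, hb.2.2] using heq (fun _ => D4.b)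
  · simpa only [hpq.1] using heq v

/-- An embedding of the ten-element algebra in the free algebra on `x, y`:
`f ↦ (x ∨ ¬x) ∧ (y ∨ ¬y)`, `p ↦ (y ∧ ¬y) ∨ (x ∧ ¬x ∧ (y ∨ ¬y))`, and `q ↦` the image of `p` with
`x` and `y` exchanged. -/
def embC : ℕ → DMTerm ℕ
  | 0 => .meet (.join (.var 0) (.neg (.var 0))) (.join (.var 1) (.neg (.var 1)))
  | 1 => .join (.meet (.var 1) (.neg (.var 1)))
      (.meet (.meet (.var 0) (.neg (.var 0))) (.join (.var 1) (.neg (.var 1))))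
  | 2 => .join (.meet (.var 0) (.neg (.var 0)))
      (.meet (.meet (.var 1) (.neg (.var 1))) (.join (.var 0) (.neg (.var 0))))
  | _ => .zero

/-- Under `embC` the ten-element algebra embeds in the free algebra, where `e ≠ p`. -/
theorem not_admissible : ¬ DMAdmissible D4alg relC (elt 2) (elt 4) := by
  intro h
  have hrel : ∀ r ∈ relC, DMIdValid D4alg (r.1.subst embC) (r.2.subst embC) := by
    simp only [relC, List.forall_mem_cons]
    refine ⟨?_, ?_, ?_, ?_, ?_, by simp⟩ <;> intro v <;>
      simp only [DMTerm.subst, embC, DMTerm.eval, D4alg] <;>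
      generalize v 0 = x <;> generalize v 1 = y <;> change D4 at x y <;>
      cases x <;> cases y <;> rfl
  -- at `x = b`, `y = a` the values of `e` and `p` are `0` and `a`
  have := h embC hrel (fun n => if n = 0 then D4.b else D4.a)
  exact absurd this (by change D4.z ≠ D4.a; decide)

theorem exists_injective {k : ℕ} (B : Fin k → DMAlg)
    (h : ∀ (Γ : List (DMTerm ℕ × DMTerm ℕ)) (φ ψ : DMTerm ℕ),
      (∀ i, DMQValid (B i) Γ φ ψ) ↔ DMAdmissible D4alg Γ φ ψ) :
    ∃ i, ∃ g : Fin 10 → (B i).carrier, Function.Injective g := by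
  have hnot := mt (h relC (elt 2) (elt 4)).mp not_admissible
  simp only [DMQValid, not_forall] at hnot
  obtain ⟨m, v, hv, hne⟩ := hnot
  refine ⟨m, fun i => (elt i).eval (B m) v, fun i j hij => ?_⟩
  by_contra hij'
  refine hne ((h _ _ _).mpr (admissible_of_ne hij') m v ?_)
  rw [List.forall_mem_cons]
  exact ⟨hij, hv⟩

theorem exists_ten_le_card {k : ℕ} (B : Fin k → DMAlg) (hfin : ∀ i, Finite (B i).carrier)
    (h : ∀ (Γ : List (DMTerm ℕ × DMTerm ℕ)) (φ ψ : DMTerm ℕ),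
      (∀ i, DMQValid (B i) Γ φ ψ) ↔ DMAdmissible D4alg Γ φ ψ) :
    ∃ i, 10 ≤ Nat.card (B i).carrier := by
  obtain ⟨i, g, hg⟩ := exists_injective B h
  have := hfin i
  exact ⟨i, by simpa using Nat.card_le_card_of_injective g hg⟩

theorem statement5 :
    (∀ (k : ℕ) (B : Fin k → DMAlg),
      (∀ i, Finite (B i).carrier) →
      (∀ (Γ : List (DMTerm ℕ × DMTerm ℕ)) (φ ψ : DMTerm ℕ),
        (∀ i, DMQValid (B i) Γ φ ψ) ↔ DMAdmissible D4alg Γ φ ψ) →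
      MultisetLE ({10} : Multiset ℕ)
        (↑(List.ofFn fun i => Nat.card (B i).carrier))) ∧
    -- in particular, no single algebra of fewer than 10 elements suffices
    (∀ B : DMAlg, Finite B.carrier →
      (∀ (Γ : List (DMTerm ℕ × DMTerm ℕ)) (φ ψ : DMTerm ℕ),
        DMQValid B Γ φ ψ ↔ DMAdmissible D4alg Γ φ ψ) →
      10 ≤ Nat.card B.carrier) := by
  refine ⟨fun k B hfin h x hx => ?_, fun B hfin h => ?_⟩
  · obtain ⟨i, hi⟩ := exists_ten_le_card B hfin h
    have hmem : Nat.card (B i).carrier ∈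
        ((List.ofFn fun i => Nat.card (B i).carrier : List ℕ) : Multiset ℕ) := by
      rw [Multiset.mem_coe, List.mem_ofFn]
      exact ⟨i, rfl⟩
    have hpos := Multiset.count_pos.mpr hmem
    obtain rfl : x = 10 := Multiset.mem_singleton.mp (Multiset.count_pos.mp (by omega))
    have h10 : ({10} : Multiset ℕ).count 10 = 1 := Multiset.count_singleton_self 10
    have hne : Nat.card (B i).carrier ≠ 10 := by
      intro heq
      rw [heq] at hpos
      omega
    refine ⟨_, lt_of_le_of_ne hi hne.symm, ?_⟩
    rwa [Multiset.count_singleton, if_neg hne]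
  · obtain ⟨_, hi⟩ := exists_ten_le_card (fun _ : Fin 1 => B) (fun _ => hfin)
      fun Γ φ ψ => (forall_const _).trans (h Γ φ ψ)
    exact hi
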